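/- Let q be real with 0 < q < 1, let ω > 0 be real, let s ∈ ℂ, let t ∈ ℂ with Re(t) > 0, and let z ∈ ℂ with Re(z) > 0. Then ∑_{n=0}^{∞} q^{nωt} / [nω+z]_q^s = [ω]_q^{−s} · ∑_{n=0}^{∞} (q^ω)^{nt} / [n + z/ω]_{q^ω}^s; that is, ζ_{q,1}(s,t,z;ω) = [ω]_q^{−s} · ζ_{q^ω,1}(s,t,z/ω). -/

import Mathlib

/-!
The identity holds term by term: `(q^ω)^w = q^(ωw)` gives `[ωw]_q = [ω]_q [w]_{q^ω}`, and since
`[ω]_q` is a positive real it does not change arguments, so the principal power `(·)^s` is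
multiplicative on this product. Both series converge, because `[n + z]_q → 1/(1 - q)` leaves the
geometric series in `q^t` up to a bounded factor.
-/

open Complex

/-- `[w]_q = (1 - q^w)/(1 - q)` for real `0 < q < 1` and complex `w`
(principal complex power of the positive real `q`). -/
noncomputable def qNum (q : ℝ) (w : ℂ) : ℂ := (1 - (q : ℂ) ^ w) / (1 - (q : ℂ))

open Filter Topology

lemma ofReal_mul_cpow {a : ℝ} (ha : 0 < a) {x : ℂ} (hx : x ≠ 0) (s : ℂ) :
    ((a : ℂ) * x) ^ s = (a : ℂ) ^ s * x ^ s := by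
  have ha' : (a : ℂ) ≠ 0 := ofReal_ne_zero.mpr ha.ne'
  rw [cpow_def_of_ne_zero (mul_ne_zero ha' hx), cpow_def_of_ne_zero ha', cpow_def_of_ne_zero hx,
    log_ofReal_mul ha hx, ofReal_log ha.le, add_mul, exp_add]

section

variable {q : ℝ}

lemma rpow_ne_one (hq0 : 0 < q) (hq1 : q ≠ 1) {x : ℝ} (hx : x ≠ 0) : q ^ x ≠ 1 := fun h =>
  hx ((Real.rpow_right_inj hq0 hq1).mp (h.trans (Real.rpow_zero q).symm))

lemma one_sub_rpow_div_one_sub_pos (hq0 : 0 < q) (hq1 : q ≠ 1) {x : ℝ} (hx : 0 < x) :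
    0 < (1 - q ^ x) / (1 - q) := by
  rcases hq1.lt_or_gt with hlt | hgt
  · exact div_pos (sub_pos.mpr (Real.rpow_lt_one hq0.le hlt hx)) (sub_pos.mpr hlt)
  · exact div_pos_of_neg_of_neg (sub_neg.mpr (Real.one_lt_rpow hgt hx)) (sub_neg.mpr hgt)

lemma qNum_ne_zero (hq0 : 0 < q) (hq1 : q ≠ 1) {w : ℂ} (hw : w.re ≠ 0) : qNum q w ≠ 0 := by
  have hpow : (q : ℂ) ^ w ≠ 1 := fun h => rpow_ne_one hq0 hq1 hw <| by
    rw [← norm_cpow_eq_rpow_re_of_pos hq0, h, norm_one]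
  exact div_ne_zero (sub_ne_zero.mpr hpow.symm) (sub_ne_zero.mpr (mod_cast hq1.symm))

lemma qNum_ofReal_mul (hq0 : 0 < q) (hq1 : q ≠ 1) {ω : ℝ} (hω : ω ≠ 0) (w : ℂ) :
    qNum q (ω * w) = ((1 - q ^ ω) / (1 - q) : ℝ) * qNum (q ^ ω) w := by
  have hden : (1 : ℂ) - (q ^ ω : ℝ) ≠ 0 :=
    sub_ne_zero.mpr (mod_cast (rpow_ne_one hq0 hq1 hω).symm)
  rw [qNum, qNum, cpow_mul_ofReal_nonneg hq0.le]
  push_cast at hden ⊢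
  field_simp

lemma tendsto_qNum_natCast_add (hq0 : 0 < q) (hq1 : q < 1) (z : ℂ) :
    Tendsto (fun n : ℕ => qNum q (n + z)) atTop (𝓝 (1 - q : ℝ)⁻¹) := by
  have hpow : Tendsto (fun n : ℕ => (q : ℂ) ^ n * (q : ℂ) ^ z) atTop (𝓝 0) := by
    simpa only [zero_mul] using (tendsto_pow_atTop_nhds_zero_of_norm_lt_one
      (by rwa [Complex.norm_of_nonneg hq0.le])).mul_const ((q : ℂ) ^ z)
  simpa [qNum, cpow_add _ _ (ofReal_ne_zero.mpr hq0.ne')] using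
    (hpow.const_sub 1).div_const (1 - (q : ℂ))

lemma summable_cpow_div_qNum_cpow (hq0 : 0 < q) (hq1 : q < 1) (s : ℂ) {t : ℂ} (ht : 0 < t.re)
    (z : ℂ) : Summable fun n : ℕ => (q : ℂ) ^ (n * t) / qNum q (n + z) ^ s := by
  have hgeom : Summable fun n : ℕ => ‖(q : ℂ) ^ (n * t)‖ := by
    have hqt : ‖(q : ℂ) ^ t‖ < 1 := by
      rw [norm_cpow_eq_rpow_re_of_pos hq0]
      exact Real.rpow_lt_one hq0.le hq1 ht
    simpa only [cpow_nat_mul] using summable_norm_geometric_of_norm_lt_one hqt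
  have hlim : ((1 - q : ℝ)⁻¹ : ℂ) ∈ slitPlane := by
    rw [← ofReal_inv, ofReal_mem_slitPlane]
    exact inv_pos.mpr (sub_pos.mpr hq1)
  have hbounded : Tendsto (fun n : ℕ => (qNum q (n + z) ^ s)⁻¹) atTop
      (𝓝 (((1 - q : ℝ)⁻¹ : ℂ) ^ s)⁻¹) :=
    ((tendsto_qNum_natCast_add hq0 hq1 z).cpow tendsto_const_nhds hlim).inv₀
      (cpow_ne_zero_iff.mpr (.inl (slitPlane_ne_zero hlim)))
  simpa only [div_eq_mul_inv] using
    hgeom.mul_tendsto_const (Nat.cofinite_eq_atTop ▸ hbounded)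

end

theorem zetaQ_one_omega_scaling_general {q : ℝ} (hq0 : 0 < q) (hq1 : q ≠ 1) {ω : ℝ} (hω : 0 < ω)
    {s t z : ℂ} (hne : ∀ n : ℕ, qNum (q ^ ω) (n + z / ω) ≠ 0) {a : ℂ}
    (ha : HasSum (fun n : ℕ => ((q ^ ω : ℝ) : ℂ) ^ (n * t) / qNum (q ^ ω) (n + z / ω) ^ s) a) :
    HasSum (fun n : ℕ => (q : ℂ) ^ (n * ω * t) / qNum q ((n * ω : ℝ) + z) ^ s)
      (((1 - q ^ ω) / (1 - q) : ℝ) ^ (-s) * a) := by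
  have hω0 : (ω : ℂ) ≠ 0 := ofReal_ne_zero.mpr hω.ne'
  refine (ha.mul_left _).congr_fun fun n => ?_
  have hnum : (q : ℂ) ^ (n * ω * t) = ((q ^ ω : ℝ) : ℂ) ^ (n * t) := by
    rw [← cpow_mul_ofReal_nonneg hq0.le, mul_left_comm, mul_assoc]
  have hden : qNum q ((n * ω : ℝ) + z) ^ s
      = ((1 - q ^ ω) / (1 - q) : ℝ) ^ s * qNum (q ^ ω) (n + z / ω) ^ s := by
    have harg : ((n * ω : ℝ) : ℂ) + z = ω * (n + z / ω) := by
      push_cast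
      field_simp
    rw [harg, qNum_ofReal_mul hq0 hq1 hω.ne',
      ofReal_mul_cpow (one_sub_rpow_div_one_sub_pos hq0 hq1 hω) (hne n)]
  rw [hnum, hden, cpow_neg, div_mul_eq_div_div_swap, div_eq_inv_mul _ (_ ^ s)]

/-- For `0 < q < 1`, real `ω > 0`, `Re t > 0` and `Re z > 0`:
`∑_{n≥0} q^{nωt}/[nω+z]_q^s = [ω]_q^{−s} ∑_{n≥0} (q^ω)^{nt}/[n+z/ω]_{q^ω}^s`,
i.e. `ζ_{q,1}(s,t,z;ω) = [ω]_q^{−s} ζ_{q^ω,1}(s,t,z/ω)`. -/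
theorem zetaQ_one_omega_scaling (q : ℝ) (hq0 : 0 < q) (hq1 : q < 1) (ω : ℝ) (hω : 0 < ω)
    (s t z : ℂ) (ht : 0 < t.re) (hz : 0 < z.re) :
    ∑' n : ℕ, (q : ℂ) ^ ((n : ℂ) * (ω : ℂ) * t) / (qNum q (((n : ℝ) * ω : ℝ) + z)) ^ s
      = (((1 - q ^ ω) / (1 - q) : ℝ) : ℂ) ^ (-s) *
          ∑' n : ℕ, ((q ^ ω : ℝ) : ℂ) ^ ((n : ℂ) * t)
            / (qNum (q ^ ω) ((n : ℂ) + z / (ω : ℂ))) ^ s := by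
  have hqω0 : 0 < q ^ ω := Real.rpow_pos_of_pos hq0 ω
  have hqω1 : q ^ ω < 1 := Real.rpow_lt_one hq0.le hq1 hω
  have hre (n : ℕ) : 0 < ((n : ℂ) + z / ω).re := by
    rw [add_re, natCast_re, div_ofReal_re]
    positivity
  exact (zetaQ_one_omega_scaling_general hq0 hq1.ne hω
    (fun n => qNum_ne_zero hqω0 hqω1.ne (hre n).ne')
    (summable_cpow_div_qNum_cpow hqω0 hqω1 s ht (z / ω)).hasSum).tsum_eq
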